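/- arXiv:2508.19211 — 2 statements merged into one kernel-verified Lean document; each statement's English description precedes it below -/
import Mathlib

section
/- Let ℓ be an odd prime different from char(K) and suppose ζ_ℓ ∉ K and ζ_ℓ ∈ Γ. Let τ ≥ 1 be the largest integer such that ζ_{ℓ^τ} ∈ Γ ∩ K(W_ℓ, ζ_ℓ). Then K(Γ_ℓ) ∩ K(W_ℓ, ζ_ℓ) = K(ζ_{ℓ^τ}). -/
noncomputable section

open IntermediateField

/-- `K^×` viewed as a subgroup of the units of the algebraic closure of `K`. -/
def baseUnits (K : Type*) [Field K] : Subgroup (AlgebraicClosure K)ˣ :=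
  (Units.map (algebraMap K (AlgebraicClosure K)).toMonoidHom).range

/-- The subgroup of `(AlgebraicClosure K)ˣ` of elements whose `m`-th power lies in `K^×`. -/
def radGroup (K : Type*) [Field K] (m : ℕ) : Subgroup (AlgebraicClosure K)ˣ where
  carrier := {x | ∃ y : K, algebraMap K (AlgebraicClosure K) y = (x : AlgebraicClosure K) ^ m}
  one_mem' := ⟨1, by simp⟩
  mul_mem' := by
    rintro a b ⟨y, hy⟩ ⟨z, hz⟩
    exact ⟨y * z, by rw [map_mul, hy, hz, Units.val_mul, mul_pow]⟩
  inv_mem' := by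
    rintro a ⟨y, hy⟩
    refine ⟨y⁻¹, ?_⟩
    rw [map_inv₀, hy, Units.val_inv_eq_inv_val, inv_pow]

lemma radGroup_le (K : Type*) [Field K] {m k : ℕ} :
    radGroup K m ≤ radGroup K (m * k) := by
  rintro x ⟨y, hy⟩
  exact ⟨y ^ k, by rw [map_pow, hy, ← pow_mul]⟩

/-- The group `√[ℓ^∞]{K^×}` of radicals of `ℓ`-power order over `K`. -/
def radInf (K : Type*) [Field K] (ℓ : ℕ) : Subgroup (AlgebraicClosure K)ˣ where
  carrier := {x | ∃ n : ℕ, x ∈ radGroup K (ℓ ^ n)}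
  one_mem' := ⟨0, one_mem _⟩
  mul_mem' := by
    rintro a b ⟨n, ha⟩ ⟨m, hb⟩
    refine ⟨n + m, mul_mem ?_ ?_⟩
    · have h : radGroup K (ℓ ^ n) ≤ radGroup K (ℓ ^ (n + m)) := by
        rw [pow_add]; exact radGroup_le K
      exact h ha
    · have h : radGroup K (ℓ ^ m) ≤ radGroup K (ℓ ^ (n + m)) := by
        rw [add_comm, pow_add]; exact radGroup_le K
      exact h hb
  inv_mem' := by
    rintro a ⟨n, ha⟩
    exact ⟨n, inv_mem ha⟩

/-- The units of the algebraic closure lying in an intermediate field `F`, as a subgroup. -/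
def unitsIn {K : Type*} [Field K] (F : IntermediateField K (AlgebraicClosure K)) :
    Subgroup (AlgebraicClosure K)ˣ where
  carrier := {x | (x : AlgebraicClosure K) ∈ F}
  one_mem' := by
    show ((1 : (AlgebraicClosure K)ˣ) : AlgebraicClosure K) ∈ F
    simpa using one_mem F
  mul_mem' := by
    intro a b ha hb
    show ((a * b : (AlgebraicClosure K)ˣ) : AlgebraicClosure K) ∈ F
    rw [Units.val_mul]
    exact mul_mem ha hb
  inv_mem' := by
    intro x hx
    show ((x⁻¹ : (AlgebraicClosure K)ˣ) : AlgebraicClosure K) ∈ F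
    rw [Units.val_inv_eq_inv_val]
    exact inv_mem hx

/-- `K(ζ_{2𝒫})`: the extension of `K` generated by all roots of unity whose order is `4` or
an odd prime, and not divisible by the characteristic of `K`. -/
def cyclo2P (K : Type*) [Field K] : IntermediateField K (AlgebraicClosure K) :=
  IntermediateField.adjoin K
    {x : AlgebraicClosure K |
      ∃ n : ℕ, (n = 4 ∨ (n.Prime ∧ Odd n)) ∧ ¬ (ringChar K ∣ n) ∧ IsPrimitiveRoot x n}

/-- The set of roots of unity of order exactly `n` in the algebraic closure of `K`. -/
def primRoots (K : Type*) [Field K] (n : ℕ) : Set (AlgebraicClosure K) :=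
  {x | IsPrimitiveRoot x n}

/-- The set of roots of unity of order `ℓ^n` for `n ≤ t` (all of them if `t = ∞`). -/
def pPowRoots (K : Type*) [Field K] (ℓ : ℕ) (t : ℕ∞) : Set (AlgebraicClosure K) :=
  {x | ∃ n : ℕ, (n : ℕ∞) ≤ t ∧ IsPrimitiveRoot x (ℓ ^ n)}

/-- The set of units that are roots of unity of order `ℓ^n` for `n ≤ t`. -/
def pPowRootsUnits (K : Type*) [Field K] (ℓ : ℕ) (t : ℕ∞) : Set (AlgebraicClosure K)ˣ :=
  {x | ∃ n : ℕ, (n : ℕ∞) ≤ t ∧ IsPrimitiveRoot (x : AlgebraicClosure K) (ℓ ^ n)}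

/-!
Write `L = K(W_ℓ, ζ_ℓ)` and `E = K(ζ_{ℓ^τ})`, so that `E ⊆ K(Γ_ℓ) ∩ L` and `L / K` is abelian.
Since `E` contains `ζ_ℓ`, every finitely generated piece of `E(Γ_ℓ)` is a tower of Kummer steps of
degree `ℓ` over `E`, and a norm computation in each step shows (Kneser) that every radical of
`ℓ`-power order over `E` in `E(Γ_ℓ)` lies in `Γ_ℓ · E^×`. If `E(Γ_ℓ) ∩ L` were larger than `E`,
it would contain an abelian extension of `E` of degree a positive power of `ℓ`, hence some `β ∉ E`
with `β ^ ℓ ∈ E`; up to `E^×`, this `β` is an element `γ` of `Γ_ℓ ∩ L`. But `L / K` is abelian and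
`ζ_ℓ ∉ K`, so by Schinzel's argument `γ` is a root of unity of `ℓ`-power order times an element of
`K^×`, and the maximality of `τ` puts that root of unity in `E`, a contradiction.
-/

section Groups

variable {G : Type*}

lemma mem_of_zpow_mem_of_isCoprime [Group G] {H : Subgroup G} {x : G} {a b : ℤ}
    (hab : IsCoprime a b) (ha : x ^ a ∈ H) (hb : x ^ b ∈ H) : x ∈ H := by
  obtain ⟨u, v, huv⟩ := hab
  have hx : x = (x ^ a) ^ u * (x ^ b) ^ v := by
    rw [← zpow_mul, ← zpow_mul, ← zpow_add, mul_comm a, mul_comm b, huv, zpow_one]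
  rw [hx]
  exact mul_mem (zpow_mem ha u) (zpow_mem hb v)

lemma orderOf_coprime_of_mem_closure [CommGroup G] {S : Set G} {n : ℕ}
    (hS : ∀ x ∈ S, (orderOf x).Coprime n) {x : G} (hx : x ∈ Subgroup.closure S) :
    (orderOf x).Coprime n := by
  induction hx using Subgroup.closure_induction with
  | mem x hx => exact hS x hx
  | one => simp
  | mul x y _ _ hx hy =>
    exact (hx.mul_left hy).coprime_dvd_left
      ((Commute.all x y).orderOf_mul_dvd_lcm.trans (Nat.lcm_dvd_mul _ _))
  | inv x _ hx => rwa [orderOf_inv]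

lemma mem_of_mem_sup_of_pow_eq_one [CommGroup G] {W H : Subgroup G} {n : ℕ}
    (hW : ∀ w ∈ W, (orderOf w).Coprime n) {x : G} (hx : x ∈ W ⊔ H) (hxn : x ^ n = 1) :
    x ∈ H := by
  obtain ⟨w, hw, h, hh, rfl⟩ := Subgroup.mem_sup.1 hx
  have hcop : IsCoprime (orderOf w : ℤ) n := Nat.isCoprime_iff_coprime.2 (hW w hw)
  refine mem_of_zpow_mem_of_isCoprime hcop ?_ ?_
  · rw [mul_zpow, zpow_natCast w, pow_orderOf_eq_one, one_mul]
    exact zpow_mem hh _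
  · rw [zpow_natCast, hxn]
    exact one_mem H

lemma pow_prime_pow_eq_one_of_forall_orderOf_pow_ne [Monoid G] {p n : ℕ} [Fact p.Prime] {x : G}
    (hx : ∀ j : ℕ, orderOf (x ^ j) ≠ p ^ (n + 1)) {k : ℕ} (hxk : x ^ p ^ k = 1) :
    x ^ p ^ n = 1 := by
  induction k generalizing x with
  | zero => simp [show x = 1 by simpa using hxk]
  | succ k ih =>
    by_contra hxn
    refine hx 1 ?_
    rw [pow_one]
    refine orderOf_eq_prime_pow hxn ?_
    rw [pow_succ', pow_mul]
    exact ih (fun j => by rw [← pow_mul]; exact hx _) (by rwa [← pow_mul, ← pow_succ'])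

end Groups

section RootsOfUnity

variable {F Ω : Type*} [Field F] [Field Ω] [Algebra F Ω]

lemma mem_bot_of_pow_eq_one {n : ℕ} [NeZero n] {z : F} (hz : IsPrimitiveRoot z n) {y : Ω}
    (hy : y ^ n = 1) : y ∈ (⊥ : IntermediateField F Ω) := by
  obtain ⟨i, -, rfl⟩ := (hz.map_of_injective (algebraMap F Ω).injective).eq_pow_of_pow_eq_one hy
  exact pow_mem (IntermediateField.algebraMap_mem ⊥ z) i

lemma mem_bot_of_pow_eq_pow {n : ℕ} [NeZero n] {z : F} (hz : IsPrimitiveRoot z n) {x y : Ω}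
    (hy : y ∈ (⊥ : IntermediateField F Ω)) (hxy : x ^ n = y ^ n) :
    x ∈ (⊥ : IntermediateField F Ω) := by
  obtain rfl | hy0 := eq_or_ne y 0
  · rw [zero_pow (NeZero.ne n)] at hxy
    rw [eq_zero_of_pow_eq_zero hxy]
    exact zero_mem _
  · have hdiv : (x / y) ^ n = 1 := by rw [div_pow, hxy, div_self (pow_ne_zero n hy0)]
    rw [← div_mul_cancel₀ x hy0]
    exact mul_mem (mem_bot_of_pow_eq_one hz hdiv) hy

lemma algEquiv_div_self_pow_eq_one (σ : Gal(Ω/F)) {x : Ω} (hx : x ≠ 0) {n : ℕ}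
    (hxn : x ^ n ∈ (⊥ : IntermediateField F Ω)) : (σ x / x) ^ n = 1 := by
  obtain ⟨a, ha⟩ := mem_bot.1 hxn
  rw [div_pow, ← map_pow, ← ha, AlgEquiv.commutes, ha, div_self (pow_ne_zero n hx)]

end RootsOfUnity

/-- `x` is a `p`-power radical over `F`: one of its iterated `p`-th powers lies in `F`. -/
def IsPowRadical (F : Type*) {Ω : Type*} [Field F] [Field Ω] [Algebra F Ω] (p : ℕ) (x : Ω) : Prop :=
  ∃ n : ℕ, x ^ p ^ n ∈ (⊥ : IntermediateField F Ω)

section IntermediateField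

variable {F Ω : Type*} [Field F] [Field Ω] [Algebra F Ω] {L : IntermediateField F Ω}

lemma coe_mem_bot_iff {x : L} :
    (x : Ω) ∈ (⊥ : IntermediateField F Ω) ↔ x ∈ (⊥ : IntermediateField F L) := by
  simp only [mem_bot, Set.mem_range, ← Subtype.coe_inj]
  rfl

lemma isPowRadical_coe_iff {p : ℕ} {x : L} : IsPowRadical F p (x : Ω) ↔ IsPowRadical F p x :=
  exists_congr fun n => by rw [← coe_mem_bot_iff, SubmonoidClass.coe_pow]

end IntermediateField

section PrimeDegree

variable {F N : Type*} [Field F] [Field N] [Algebra F N]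

lemma norm_eq_of_pow_finrank_eq [FiniteDimensional F N] (hodd : Odd (Module.finrank F N)) {y : N}
    (hy : F⟮y⟯ = ⊤) {a : F} (ha : y ^ Module.finrank F N = algebraMap F N a) :
    Algebra.norm F y = a := by
  have hmin : minpoly F y = Polynomial.X ^ Module.finrank F N - Polynomial.C a :=
    (minpoly.eq_of_irreducible_of_monic (irreducible_X_pow_sub_C_of_root_adjoin_eq_top ha hy)
      (by simp [ha]) (Polynomial.monic_X_pow_sub_C a Module.finrank_pos.ne')).symm
  have hint : IsIntegral F y := .of_finite F y
  have hrank : Module.finrank F⟮y⟯ N = 1 := by rw [hy, IntermediateField.finrank_top]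
  rw [Algebra.norm_eq_norm_adjoin, hrank, pow_one,
    ← adjoin.powerBasis_gen hint, Algebra.PowerBasis.norm_gen_eq_coeff_zero_minpoly]
  simp [minpoly_gen, hmin, hodd.neg_one_pow, Module.finrank_pos.ne]

variable {p : ℕ} [Fact p.Prime] (hp : Module.finrank F N = p)
include hp

lemma norm_eq_of_pow_eq (hodd : Odd p) {y : N} {a : F} (ha : y ^ p = algebraMap F N a) :
    Algebra.norm F y = a := by
  subst hp
  have : FiniteDimensional F N := .of_finrank_pos (Fact.out : Nat.Prime _).pos
  have := isSimpleOrder_of_finrank_prime F N Fact.out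
  obtain hy | hy := eq_bot_or_eq_top F⟮y⟯
  · obtain ⟨b, rfl⟩ := mem_bot.1 (adjoin_simple_eq_bot_iff.1 hy)
    rw [Algebra.norm_algebraMap]
    exact (algebraMap F N).injective (by rw [map_pow, ha])
  · exact norm_eq_of_pow_finrank_eq hodd hy ha

lemma pow_eq_one_of_norm_eq_one (hodd : Odd p) {z : F} (hz : IsPrimitiveRoot z p) {y : N} {n : ℕ}
    (hyn : y ^ p ^ n = 1) (hy : Algebra.norm F y = 1) : y ^ p = 1 := by
  induction n generalizing y with
  | zero => simp [show y = 1 by simpa using hyn]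
  | succ n ih =>
    have hypp : (y ^ p) ^ p = 1 :=
      ih (by rwa [← pow_mul, ← pow_succ']) (by rw [map_pow, hy, one_pow])
    have : NeZero p := ⟨(Fact.out : p.Prime).ne_zero⟩
    obtain ⟨a, ha⟩ := mem_bot.1 (mem_bot_of_pow_eq_one hz hypp)
    rw [← ha, ← norm_eq_of_pow_eq hp hodd ha.symm, hy, map_one]

variable [IsGalois F N]

lemma mem_bot_of_algEquiv_apply_eq {σ : Gal(N/F)} (hσ : σ ≠ 1) {x : N} (hx : σ x = x) :
    x ∈ (⊥ : IntermediateField F N) := by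
  have : FiniteDimensional F N := .of_finrank_pos (hp ▸ (Fact.out : p.Prime).pos)
  have hcard : Nat.card Gal(N/F) = p := by rw [IsGalois.card_aut_eq_finrank, hp]
  have hle : Subgroup.zpowers σ ≤ MulAction.stabilizer Gal(N/F) x := by
    rwa [Subgroup.zpowers_le, MulAction.mem_stabilizer_iff]
  exact (InfiniteGalois.mem_bot_iff_fixed x).2 fun τ => hle (mem_zpowers_of_prime_card hcard hσ)

lemma exists_eq_pow_mul_of_isPowRadical (hodd : Odd p) {z : F} (hz : IsPrimitiveRoot z p) {α : N}
    (hα : α ∉ (⊥ : IntermediateField F N)) (hαp : α ^ p ∈ (⊥ : IntermediateField F N)) {e : N}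
    (he : IsPowRadical F p e) : ∃ (i : ℕ) (c : F), e = α ^ i * algebraMap F N c := by
  have : NeZero p := ⟨(Fact.out : p.Prime).ne_zero⟩
  obtain rfl | he0 := eq_or_ne e 0
  · exact ⟨0, 0, by simp⟩
  have hα0 : α ≠ 0 := fun h => hα (h ▸ zero_mem _)
  obtain ⟨σ, hσα⟩ : ∃ σ : Gal(N/F), σ α ≠ α := by
    simpa [InfiniteGalois.mem_bot_iff_fixed] using hα
  have hσ : σ ≠ 1 := fun h => hσα (by rw [h, AlgEquiv.one_apply])
  obtain ⟨n, hn⟩ := he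
  have hnorm : Algebra.norm F (σ e / e) = 1 := by
    have : FiniteDimensional F N := .of_finrank_pos (hp ▸ (Fact.out : p.Prime).pos)
    rw [div_eq_mul_inv, map_mul, Algebra.norm_inv, Algebra.norm_eq_of_algEquiv,
      mul_inv_cancel₀ (Algebra.norm_ne_zero_iff.2 he0)]
  have hep : (σ e / e) ^ p = 1 :=
    pow_eq_one_of_norm_eq_one hp hodd hz (algEquiv_div_self_pow_eq_one σ he0 hn) hnorm
  have hαprim : IsPrimitiveRoot (σ α / α) p := by
    rw [IsPrimitiveRoot.iff_orderOf]
    exact orderOf_eq_prime (algEquiv_div_self_pow_eq_one σ hα0 hαp)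
      ((div_eq_one_iff_eq hα0).not.2 hσα)
  obtain ⟨i, -, hi⟩ := hαprim.eq_pow_of_pow_eq_one hep
  have hfix : σ (e / α ^ i) = e / α ^ i := by
    rw [div_pow, eq_div_iff he0] at hi
    rw [map_div₀, map_pow, ← hi]
    field_simp [(map_ne_zero σ).2 hα0]
  obtain ⟨c, hc⟩ := mem_bot.1 (mem_bot_of_algEquiv_apply_eq hp hσ hfix)
  exact ⟨i, c, by rw [hc, mul_div_cancel₀ e (pow_ne_zero i hα0)]⟩

end PrimeDegree

section Kummer

variable {F Ω : Type*} [Field F] [Field Ω] [Algebra F Ω] {p : ℕ} [Fact p.Prime] {z : F}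
  (hz : IsPrimitiveRoot z p) {α : Ω}
include hz

lemma minpoly_eq_X_pow_sub_C (hα : α ∉ (⊥ : IntermediateField F Ω)) {a : F}
    (ha : α ^ p = algebraMap F Ω a) : minpoly F α = Polynomial.X ^ p - Polynomial.C a := by
  have hp : p.Prime := Fact.out
  have : NeZero p := ⟨hp.ne_zero⟩
  have hirr : Irreducible (Polynomial.X ^ p - Polynomial.C a) :=
    X_pow_sub_C_irreducible_of_prime hp fun b hb =>
      hα (mem_bot_of_pow_eq_pow hz (IntermediateField.algebraMap_mem ⊥ b)
        (by rw [ha, ← hb, map_pow]))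
  exact (minpoly.eq_of_irreducible_of_monic hirr (by simp [ha])
    (Polynomial.monic_X_pow_sub_C a hp.ne_zero)).symm

lemma finrank_adjoin_simple_eq_prime (hα : α ∉ (⊥ : IntermediateField F Ω))
    (hαp : α ^ p ∈ (⊥ : IntermediateField F Ω)) : Module.finrank F F⟮α⟯ = p := by
  obtain ⟨a, ha⟩ := mem_bot.1 hαp
  have hp : p.Prime := Fact.out
  have hint : IsIntegral F α := .of_pow hp.pos (ha ▸ isIntegral_algebraMap)
  rw [adjoin.finrank hint, minpoly_eq_X_pow_sub_C hz hα ha.symm, Polynomial.natDegree_X_pow_sub_C]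

lemma isGalois_adjoin_simple_of_pow_mem (hα : α ∉ (⊥ : IntermediateField F Ω))
    (hαp : α ^ p ∈ (⊥ : IntermediateField F Ω)) : IsGalois F F⟮α⟯ := by
  have hp : p.Prime := Fact.out
  have hrank := finrank_adjoin_simple_eq_prime hz hα hαp
  have : FiniteDimensional F F⟮α⟯ := .of_finrank_pos (hrank ▸ hp.pos)
  have hroots : (primitiveRoots (Module.finrank F F⟮α⟯) F).Nonempty :=
    ⟨z, by rwa [hrank, mem_primitiveRoots hp.pos]⟩
  obtain ⟨a, ha⟩ := mem_bot.1 hαp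
  have hgen : F⟮AdjoinSimple.gen F α⟯ = ⊤ := lift_injective _ <| by
    rw [lift_adjoin_simple, lift_top, AdjoinSimple.coe_gen]
  have hpow : AdjoinSimple.gen F α ^ Module.finrank F F⟮α⟯ = algebraMap F F⟮α⟯ a := by
    rw [hrank]
    exact Subtype.ext ha.symm
  have htfae := (isCyclic_tfae F F⟮α⟯ hroots).out 2 0
  exact (htfae.1 ⟨_, ⟨a, hpow.symm⟩, hgen⟩).1

lemma exists_eq_pow_mul_of_mem_adjoin_simple (hodd : Odd p)
    (hαp : α ^ p ∈ (⊥ : IntermediateField F Ω)) {e : Ω} (heα : e ∈ F⟮α⟯)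
    (he : IsPowRadical F p e) : ∃ (i : ℕ) (c : F), e = α ^ i * algebraMap F Ω c := by
  by_cases hα : α ∈ (⊥ : IntermediateField F Ω)
  · rw [adjoin_simple_eq_bot_iff.2 hα] at heα
    obtain ⟨c, rfl⟩ := mem_bot.1 heα
    exact ⟨0, c, by simp⟩
  have := isGalois_adjoin_simple_of_pow_mem hz hα hαp
  have hgen : AdjoinSimple.gen F α ∉ (⊥ : IntermediateField F F⟮α⟯) := by
    rwa [← coe_mem_bot_iff, AdjoinSimple.coe_gen]
  have hgenp : AdjoinSimple.gen F α ^ p ∈ (⊥ : IntermediateField F F⟮α⟯) := by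
    rwa [← coe_mem_bot_iff, SubmonoidClass.coe_pow, AdjoinSimple.coe_gen]
  obtain ⟨i, c, hic⟩ := exists_eq_pow_mul_of_isPowRadical (finrank_adjoin_simple_eq_prime hz hα hαp)
    hodd hz hgen hgenp (isPowRadical_coe_iff (x := ⟨e, heα⟩).1 he)
  exact ⟨i, c, congrArg Subtype.val hic⟩

end Kummer

lemma exists_notMem_bot_pow_mem_bot {F E : Type*} [Field F] [Field E] [Algebra F E] [IsGalois F E]
    {p k : ℕ} [hp : Fact p.Prime] {z : F} (hz : IsPrimitiveRoot z p)
    (hrank : Module.finrank F E = p ^ (k + 1)) :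
    ∃ β : E, β ∉ (⊥ : IntermediateField F E) ∧ β ^ p ∈ (⊥ : IntermediateField F E) := by
  have : FiniteDimensional F E := .of_finrank_pos (hrank ▸ pow_pos hp.out.pos _)
  have hcard : Nat.card Gal(E/F) = p ^ (k + 1) := by rw [IsGalois.card_aut_eq_finrank, hrank]
  obtain ⟨H, hH⟩ := Sylow.exists_subgroup_card_pow_prime p
    (hcard ▸ pow_dvd_pow p k.le_succ : p ^ k ∣ Nat.card Gal(E/F))
  have hindex : H.index = p := by
    have := H.card_mul_index
    rw [hH, hcard, pow_succ] at this
    exact Nat.eq_of_mul_eq_mul_left (pow_pos hp.out.pos k) this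
  have : H.Normal := Subgroup.normal_of_index_eq_minFac_card
    (by rw [hindex, hcard, hp.out.pow_minFac k.succ_ne_zero])
  have hX : Module.finrank F (fixedField H) = p := by
    rw [finrank_eq_fixingSubgroup_index, fixingSubgroup_fixedField, hindex]
  have : IsCyclic Gal(fixedField H/F) :=
    isCyclic_of_prime_card (p := p) (by rw [IsGalois.card_aut_eq_finrank, hX])
  obtain ⟨β, hβp, hβ⟩ := exists_root_adjoin_eq_top_of_isCyclic F (fixedField H)
    ⟨z, by rwa [hX, mem_primitiveRoots hp.out.pos]⟩
  rw [hX, ← mem_bot] at hβp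
  refine ⟨β, fun h => hp.out.ne_one ?_, coe_mem_bot_iff.2 hβp⟩
  rw [adjoin_simple_eq_bot_iff.2 (coe_mem_bot_iff.1 h)] at hβ
  rw [← hX, ← IntermediateField.finrank_top', ← hβ, IntermediateField.finrank_bot]

section RadicalTower

variable {F Ω : Type*} [Field F] [Field Ω] [Algebra F Ω] {p : ℕ}

lemma isPowRadical_div {x y : Ω} (hx : IsPowRadical F p x) (hy : IsPowRadical F p y) :
    IsPowRadical F p (x / y) := by
  obtain ⟨m, hm⟩ := hx
  obtain ⟨n, hn⟩ := hy
  refine ⟨m + n, ?_⟩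
  rw [div_pow, pow_add, pow_mul, mul_comm, pow_mul y]
  exact div_mem (pow_mem hm _) (pow_mem hn _)

lemma isPowRadical_of_intermediateField (E : IntermediateField F Ω) {x : Ω}
    (hx : IsPowRadical F p x) : IsPowRadical E p x := by
  obtain ⟨n, hn⟩ := hx
  obtain ⟨a, ha⟩ := mem_bot.1 hn
  exact ⟨n, mem_bot.2 ⟨algebraMap F E a, ha⟩⟩

variable {Γ : Submonoid Ω}

lemma sup_adjoin_simple_induction {P : IntermediateField F Ω → Prop}
    (step : ∀ X, P X → ∀ α ∈ Γ, α ^ p ∈ X → P (X ⊔ F⟮α⟯)) {X : IntermediateField F Ω} (hX : P X)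
    {γ : Ω} (hγ : γ ∈ Γ) {n : ℕ} (hγn : γ ^ p ^ n ∈ X) : P (X ⊔ F⟮γ⟯) := by
  induction n generalizing γ with
  | zero => rwa [sup_eq_left.2 (adjoin_simple_le_iff.2 (by simpa using hγn))]
  | succ n ih =>
    have hγp : F⟮γ ^ p⟯ ≤ F⟮γ⟯ := adjoin_simple_le_iff.2 (pow_mem (mem_adjoin_simple_self F γ) p)
    have hP : P (X ⊔ F⟮γ ^ p⟯) := ih (pow_mem hγ p) (by rwa [← pow_mul, ← pow_succ'])
    have := step _ hP γ hγ (le_sup_right (a := X) (mem_adjoin_simple_self F (γ ^ p)))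
    rwa [sup_assoc, sup_eq_right.2 hγp] at this

lemma adjoin_finset_induction {P : IntermediateField F Ω → Prop} (bot : P ⊥)
    (step : ∀ X, P X → ∀ α ∈ Γ, α ^ p ∈ X → P (X ⊔ F⟮α⟯))
    (hΓ : ∀ γ ∈ Γ, IsPowRadical F p γ) (s : Finset Ω) (hs : (s : Set Ω) ⊆ Γ) :
    P (adjoin F s) := by
  classical
  induction s using Finset.induction_on with
  | empty => simpa using bot
  | insert γ s _ ih =>
    rw [Finset.coe_insert, Set.insert_subset_iff] at hs
    obtain ⟨n, hn⟩ := hΓ γ hs.1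
    rw [Finset.coe_insert, Set.insert_eq, adjoin_union, sup_comm]
    exact sup_adjoin_simple_induction step (ih hs.2) hs.1 (bot_le (a := adjoin F (s : Set Ω)) hn)

variable [Fact p.Prime] {z : F} (hz : IsPrimitiveRoot z p)
include hz

lemma finrank_sup_adjoin_simple (X : IntermediateField F Ω) {α : Ω} (hα : α ∉ X)
    (hαp : α ^ p ∈ X) : Module.finrank F ↥(X ⊔ F⟮α⟯) = Module.finrank F X * p := by
  have hzX : IsPrimitiveRoot (algebraMap F X z) p :=
    hz.map_of_injective (algebraMap F X).injective
  have hbot {y : Ω} : y ∈ (⊥ : IntermediateField X Ω) ↔ y ∈ X := by simp [mem_bot]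
  rw [← restrictScalars_adjoin_eq_sup,
    ← finrank_adjoin_simple_eq_prime hzX (hbot.not.2 hα) (hbot.2 hαp)]
  exact (Module.finrank_mul_finrank F X X⟮α⟯).symm

lemma exists_finrank_adjoin_eq_prime_pow (hΓ : ∀ γ ∈ Γ, IsPowRadical F p γ) (s : Finset Ω)
    (hs : (s : Set Ω) ⊆ Γ) : ∃ k : ℕ, Module.finrank F (adjoin F (s : Set Ω)) = p ^ k := by
  refine adjoin_finset_induction (P := fun X => ∃ k : ℕ, Module.finrank F X = p ^ k)
    ⟨0, by simp⟩ ?_ hΓ s hs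
  rintro X ⟨k, hk⟩ α - hαp
  by_cases hα : α ∈ X
  · exact ⟨k, by rw [sup_eq_left.2 (adjoin_simple_le_iff.2 hα), hk]⟩
  · exact ⟨k + 1, by rw [finrank_sup_adjoin_simple hz X hα hαp, hk, pow_succ]⟩

lemma exists_eq_mul_of_mem_sup_adjoin_simple (hodd : Odd p) (hΓ : ∀ γ ∈ Γ, IsPowRadical F p γ)
    {X : IntermediateField F Ω}
    (hX : ∀ e ∈ X, IsPowRadical F p e → ∃ γ ∈ Γ, ∃ c : F, e = γ * algebraMap F Ω c)
    {α : Ω} (hα : α ∈ Γ) (hαp : α ^ p ∈ X) {e : Ω} (heX : e ∈ X ⊔ F⟮α⟯)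
    (he : IsPowRadical F p e) : ∃ γ ∈ Γ, ∃ c : F, e = γ * algebraMap F Ω c := by
  rw [← restrictScalars_adjoin_eq_sup] at heX
  have hzX : IsPrimitiveRoot (algebraMap F X z) p :=
    hz.map_of_injective (algebraMap F X).injective
  obtain ⟨i, c, rfl⟩ := exists_eq_pow_mul_of_mem_adjoin_simple hzX hodd
    (by simpa [mem_bot] using hαp) heX (isPowRadical_of_intermediateField X he)
  by_cases hαi : α ^ i = 0
  · exact ⟨1, one_mem Γ, 0, by simp [hαi]⟩
  have hc : IsPowRadical F p (c : Ω) := by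
    simpa [mul_div_cancel_left₀ _ hαi] using isPowRadical_div he (hΓ _ (pow_mem hα i))
  obtain ⟨γ, hγ, d, hd⟩ := hX c c.2 hc
  exact ⟨α ^ i * γ, mul_mem (pow_mem hα i) hγ, d, by rw [mul_assoc, ← hd]; rfl⟩

lemma exists_eq_mul_of_mem_adjoin (hodd : Odd p) (hΓ : ∀ γ ∈ Γ, IsPowRadical F p γ) {e : Ω}
    (heΓ : e ∈ adjoin F (Γ : Set Ω)) (he : IsPowRadical F p e) :
    ∃ γ ∈ Γ, ∃ c : F, e = γ * algebraMap F Ω c := by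
  obtain ⟨s, hs, hes⟩ := exists_finset_of_mem_adjoin heΓ
  refine adjoin_finset_induction
    (P := fun X => ∀ e ∈ X, IsPowRadical F p e → ∃ γ ∈ Γ, ∃ c : F, e = γ * algebraMap F Ω c)
    ?_ ?_ hΓ s hs e hes he
  · rintro _ he -
    obtain ⟨c, rfl⟩ := mem_bot.1 he
    exact ⟨1, one_mem Γ, c, (one_mul _).symm⟩
  · intro X hX α hα hαp e heX he
    exact exists_eq_mul_of_mem_sup_adjoin_simple hz hodd hΓ hX hα hαp heX he

lemma mem_bot_of_mem_adjoin_of_isGalois (hodd : Odd p) (hΓ : ∀ γ ∈ Γ, IsPowRadical F p γ) {x : Ω}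
    [IsGalois F F⟮x⟯] (hx : x ∈ adjoin F (Γ : Set Ω))
    (hΓx : ∀ γ ∈ Γ, γ ∈ F⟮x⟯ → γ ∈ (⊥ : IntermediateField F Ω)) :
    x ∈ (⊥ : IntermediateField F Ω) := by
  obtain ⟨s, hs, hxs⟩ := exists_finset_of_mem_adjoin hx
  obtain ⟨k, hk⟩ := exists_finrank_adjoin_eq_prime_pow hz hΓ s hs
  obtain ⟨j, -, hj⟩ := (Nat.dvd_prime_pow Fact.out).1
    (hk ▸ finrank_dvd_of_le_right (adjoin_simple_le_iff.2 hxs))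
  obtain _ | j := j
  · exact finrank_adjoin_simple_eq_one_iff.1 hj
  obtain ⟨β, hβ, hβp⟩ := exists_notMem_bot_pow_mem_bot hz hj
  rw [← coe_mem_bot_iff] at hβ hβp
  obtain ⟨γ, hγ, c, hc⟩ := exists_eq_mul_of_mem_adjoin hz hodd hΓ
    (adjoin_simple_le_iff.2 hx β.2) ⟨1, by rwa [pow_one]⟩
  have hc0 : algebraMap F Ω c ≠ 0 := fun h => hβ (by rw [hc, h, mul_zero]; exact zero_mem _)
  have hγx : γ ∈ F⟮x⟯ := by
    rw [eq_div_of_mul_eq hc0 hc.symm]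
    exact div_mem β.2 (IntermediateField.algebraMap_mem _ c)
  refine absurd ?_ hβ
  rw [hc]
  exact mul_mem (hΓx γ hγ hγx) (IntermediateField.algebraMap_mem _ c)

lemma adjoin_inf_eq_bot (hodd : Odd p) (hΓ : ∀ γ ∈ Γ, IsPowRadical F p γ)
    (L : IntermediateField F Ω) [IsAbelianGalois F L]
    (hΓL : ∀ γ ∈ Γ, γ ∈ L → γ ∈ (⊥ : IntermediateField F Ω)) : adjoin F (Γ : Set Ω) ⊓ L = ⊥ := by
  refine eq_bot_iff.2 fun x hx => ?_
  have hxL : F⟮x⟯ ≤ L := adjoin_simple_le_iff.2 hx.2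
  have : IsAbelianGalois F F⟮x⟯ := .of_algHom (inclusion hxL)
  exact mem_bot_of_mem_adjoin_of_isGalois hz hodd hΓ hx.1 fun γ hγ h => hΓL γ hγ (hxL h)

end RadicalTower

section AbelianExtension

variable {K C : Type*} [Field K] [Field C] [Algebra K C]

lemma isAbelianGalois_adjoin_of_isOfFinOrder {S : Set C} (hS : ∀ x ∈ S, IsOfFinOrder x) :
    IsAbelianGalois K (adjoin K S) := by
  let T : Set ℕ := {n | ∃ r : C, IsPrimitiveRoot r n}
  have hST : S ⊆ {x | ∃ n ∈ T, n ≠ 0 ∧ x ^ n = 1} := fun x hx =>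
    ⟨orderOf x, ⟨x, .orderOf x⟩, (hS x hx).orderOf_pos.ne', pow_orderOf_eq_one x⟩
  have := isCyclotomicExtension_adjoin_of_exists_isPrimitiveRoot T K C fun _ hn _ => hn
  have := IsCyclotomicExtension.isAbelianGalois T K
    (adjoin K {x : C | ∃ n ∈ T, n ≠ 0 ∧ x ^ n = 1})
  exact .of_algHom (inclusion (adjoin.mono K _ _ hST))

lemma exists_forall_apply_eq_zpow (σ : Gal(C/K)) (n : ℕ) [NeZero n] :
    ∃ m : ℤ, ∀ x : C, x ^ n = 1 → σ x = x ^ m := by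
  obtain ⟨m, hm⟩ := MonoidHom.map_cyclic (restrictRootsOfUnity σ n)
  refine ⟨m, fun x hx => ?_⟩
  simpa using congrArg (fun y : rootsOfUnity n C => ((y : Cˣ) : C))
    (hm (rootsOfUnity.mkOfPowEq x hx))

lemma isCoprime_sub_one_of_apply_eq_zpow {p : ℕ} (hp : p.Prime) {σ : Gal(C/K)} {z : C}
    (hz : IsPrimitiveRoot z p) {m : ℤ} (hm : σ z = z ^ m) (hσz : σ z ≠ z) :
    IsCoprime (m - 1) p := by
  refine ((Nat.prime_iff_prime_int.1 hp).coprime_iff_not_dvd.2 fun hdvd => hσz ?_).symm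
  have hz0 : z ≠ 0 := hz.ne_zero hp.ne_zero
  have hone : z ^ (m - 1) = 1 := (hz.zpow_eq_one_iff_dvd _).2 hdvd
  rw [hm, ← sub_add_cancel m 1, zpow_add_one₀ hz0, hone, one_mul]

variable [IsAbelianGalois K C]

open scoped IsMulCommutative in
lemma apply_div_zpow_mem_bot {n : ℕ} {σ : Gal(C/K)} {m : ℤ} (hm : ∀ x : C, x ^ n = 1 → σ x = x ^ m)
    {g : C} (hg : g ≠ 0) (hgn : g ^ n ∈ (⊥ : IntermediateField K C)) :
    σ g / g ^ m ∈ (⊥ : IntermediateField K C) := by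
  refine (InfiniteGalois.mem_bot_iff_fixed _).2 fun τ => ?_
  have hχ : τ g / g ≠ 0 := div_ne_zero ((map_ne_zero τ).2 hg) hg
  have hτg : τ g = τ g / g * g := (div_mul_cancel₀ _ hg).symm
  have hτσg : τ (σ g) = (τ g / g) ^ m * σ g := by
    rw [← AlgEquiv.mul_apply, mul_comm τ, AlgEquiv.mul_apply, hτg, map_mul,
      hm _ (algEquiv_div_self_pow_eq_one τ hg hgn), ← hτg]
  rw [map_div₀, map_zpow₀, hτσg, hτg, mul_zpow, ← hτg, mul_div_mul_left _ _ (zpow_ne_zero m hχ)]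

lemma exists_eq_rootOfUnity_mul_of_isPowRadical {p : ℕ} (hp : p.Prime) {z : C}
    (hz : IsPrimitiveRoot z p) (hzK : z ∉ (⊥ : IntermediateField K C)) {g : C}
    (hg : IsPowRadical K p g) :
    ∃ (η : C) (n : ℕ) (c : K), η ^ p ^ n = 1 ∧ g = η * algebraMap K C c := by
  obtain rfl | hg0 := eq_or_ne g 0
  · exact ⟨1, 0, 0, by simp⟩
  obtain ⟨n, hn⟩ := hg
  have hn' : g ^ p ^ (n + 1) ∈ (⊥ : IntermediateField K C) := by
    rw [pow_succ, pow_mul]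
    exact pow_mem hn p
  obtain ⟨σ, hσz⟩ : ∃ σ : Gal(C/K), σ z ≠ z := by
    simpa [InfiniteGalois.mem_bot_iff_fixed] using hzK
  have : NeZero (p ^ (n + 1)) := ⟨pow_ne_zero _ hp.ne_zero⟩
  obtain ⟨m, hm⟩ := exists_forall_apply_eq_zpow σ (p ^ (n + 1))
  have hσz' : σ z = z ^ m := hm z (by rw [pow_succ', pow_mul, hz.pow_eq_one, one_pow])
  -- `σ g` is both `(σ g / g) * g` and, up to `K`, `g ^ m`: this controls `g ^ (m - 1)`, where
  -- `m - 1` is prime to `p`.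
  obtain ⟨u, v, huv⟩ :=
    (isCoprime_sub_one_of_apply_eq_zpow hp hz hσz' hσz).pow_right (n := n + 1)
  have hσg0 : σ g ≠ 0 := (map_ne_zero σ).2 hg0
  have hη : ((σ g / g) ^ u) ^ p ^ (n + 1) = 1 := by
    rw [← zpow_natCast, zpow_comm, zpow_natCast, algEquiv_div_self_pow_eq_one σ hg0 hn', one_zpow]
  have hsplit : g = (σ g / g) ^ u * ((σ g / g ^ m) ^ (-u) * (g ^ p ^ (n + 1)) ^ v) := by
    have : g ^ (m - 1) = (σ g / g) * (σ g / g ^ m)⁻¹ := by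
      rw [zpow_sub_one₀ hg0]
      field_simp
    calc g = (g ^ (m - 1)) ^ u * (g ^ p ^ (n + 1)) ^ v := by
          rw [← zpow_natCast g, ← zpow_mul, ← zpow_mul, ← zpow_add₀ hg0, mul_comm (m - 1),
            mul_comm _ v, Nat.cast_pow, huv, zpow_one]
      _ = _ := by rw [this, mul_zpow, inv_zpow', mul_assoc]
  obtain ⟨c, hc⟩ := mem_bot.1
    (mul_mem (zpow_mem (apply_div_zpow_mem_bot hm hg0 hn') (-u)) (zpow_mem hn' v))
  exact ⟨_, n + 1, c, hη, by rw [hc]; exact hsplit⟩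

end AbelianExtension

section Intersection

variable {K Ω : Type*} [Field K] [Field Ω] [Algebra K Ω] {p : ℕ} {E L : IntermediateField K Ω}
  [IsAbelianGalois K L]

lemma adjoin_inf_le [Fact p.Prime] (hodd : Odd p) {Γ : Submonoid Ω}
    (hΓ : ∀ γ ∈ Γ, IsPowRadical K p γ) (hEL : E ≤ L) {z : Ω} (hz : IsPrimitiveRoot z p)
    (hzE : z ∈ E) (hΓL : ∀ γ ∈ Γ, γ ∈ L → γ ∈ E) : adjoin K (Γ : Set Ω) ⊓ L ≤ E := by
  have : IsAbelianGalois K (extendScalars hEL) := ‹IsAbelianGalois K L›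
  have : IsAbelianGalois E (extendScalars hEL) := .tower_top K E _
  have hzE' : IsPrimitiveRoot (⟨z, hzE⟩ : E) p := IsPrimitiveRoot.coe_submonoidClass_iff.1 hz
  have hmem {y : Ω} : y ∈ (⊥ : IntermediateField E Ω) ↔ y ∈ E := by simp [mem_bot]
  have hbot : adjoin E (Γ : Set Ω) ⊓ extendScalars hEL = ⊥ :=
    adjoin_inf_eq_bot hzE' hodd (fun γ hγ => isPowRadical_of_intermediateField E (hΓ γ hγ)) _
      fun γ hγ hγL => hmem.2 (hΓL γ hγ hγL)
  have hle : adjoin K (Γ : Set Ω) ≤ (adjoin E (Γ : Set Ω)).restrictScalars K :=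
    adjoin_le_iff.2 (subset_adjoin E _)
  exact fun y hy => hmem.1 (hbot ▸ ⟨hle hy.1, hy.2⟩)

variable {Γ : Subgroup Ωˣ} (hΓK : ∀ c : Kˣ, Units.map (algebraMap K Ω : K →* Ω) c ∈ Γ)
  (hΓ : ∀ γ ∈ Γ, IsPowRadical K p (γ : Ω)) {z : Ω}
include hΓK hΓ

lemma exists_eq_rootOfUnity_mul_of_mem (hp : p.Prime) (hz : IsPrimitiveRoot z p) (hzL : z ∈ L)
    (hzK : z ∉ (⊥ : IntermediateField K Ω)) {γ : Ωˣ} (hγ : γ ∈ Γ) (hγL : (γ : Ω) ∈ L) :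
    ∃ η ∈ Γ, ∃ (n : ℕ) (c : Kˣ), (η : Ω) ∈ L ∧ η ^ p ^ n = 1 ∧
      γ = η * Units.map (algebraMap K Ω : K →* Ω) c := by
  obtain ⟨η, n, c, hη, hγη⟩ := exists_eq_rootOfUnity_mul_of_isPowRadical hp
    (IsPrimitiveRoot.coe_submonoidClass_iff.1 hz : IsPrimitiveRoot (⟨z, hzL⟩ : L) p)
    (coe_mem_bot_iff.not.1 hzK) (isPowRadical_coe_iff (x := (⟨(γ : Ω), hγL⟩ : L)).1 (hΓ γ hγ))
  have hγη' : (γ : Ω) = η * algebraMap K Ω c := congrArg Subtype.val hγη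
  have hc : c ≠ 0 := fun h => γ.ne_zero (by rw [hγη', h, map_zero, mul_zero])
  let c' : Ωˣ := Units.map (algebraMap K Ω : K →* Ω) (Units.mk0 c hc)
  have hη' : ((γ / c' : Ωˣ) : Ω) = η := by
    rw [Units.val_div_eq_div_val, hγη']
    exact mul_div_cancel_right₀ _ c'.ne_zero
  refine ⟨γ / c', div_mem hγ (hΓK _), n, Units.mk0 c hc, hη' ▸ η.2, ?_, (div_mul_cancel γ c').symm⟩
  rw [Units.ext_iff, Units.val_pow_eq_pow_val, hη']
  exact congrArg Subtype.val hη

lemma mem_adjoin_primitiveRoot_of_mem_of_mem [Fact p.Prime] (hz : IsPrimitiveRoot z p)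
    (hzL : z ∈ L) (hzK : z ∉ (⊥ : IntermediateField K Ω)) {n : ℕ} {x : Ω}
    (hx : IsPrimitiveRoot x (p ^ n))
    (hmax : ∀ y ∈ Γ, (y : Ω) ∈ L → ¬ IsPrimitiveRoot (y : Ω) (p ^ (n + 1))) {γ : Ωˣ} (hγ : γ ∈ Γ)
    (hγL : (γ : Ω) ∈ L) : (γ : Ω) ∈ K⟮x⟯ := by
  have hp : p.Prime := Fact.out
  obtain ⟨η, hηΓ, k, c, hηL, hηk, rfl⟩ :=
    exists_eq_rootOfUnity_mul_of_mem hΓK hΓ hp hz hzL hzK hγ hγL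
  have hηn : η ^ p ^ n = 1 :=
    pow_prime_pow_eq_one_of_forall_orderOf_pow_ne (fun j hj => hmax (η ^ j) (pow_mem hηΓ j)
      (by rw [Units.val_pow_eq_pow_val]; exact pow_mem hηL j)
      (IsPrimitiveRoot.coe_units_iff.2 (IsPrimitiveRoot.iff_orderOf.2 hj))) hηk
  have : NeZero (p ^ n) := ⟨pow_ne_zero n hp.ne_zero⟩
  obtain ⟨i, -, hi⟩ := hx.eq_pow_of_pow_eq_one
    (show (η : Ω) ^ p ^ n = 1 by rw [← Units.val_pow_eq_pow_val, hηn, Units.val_one])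
  rw [Units.val_mul, ← hi]
  exact mul_mem (pow_mem (mem_adjoin_simple_self K x) i)
    (IntermediateField.algebraMap_mem _ (c : K))

lemma adjoin_inf_eq_adjoin_primitiveRoot [Fact p.Prime] (hodd : Odd p)
    (hK : ¬ ∃ z : K, IsPrimitiveRoot z p) {n : ℕ} (hn : 1 ≤ n) {x : Ωˣ}
    (hx : IsPrimitiveRoot (x : Ω) (p ^ n)) (hxΓ : x ∈ Γ) (hxL : (x : Ω) ∈ L)
    (hmax : ∀ y ∈ Γ, (y : Ω) ∈ L → ¬ IsPrimitiveRoot (y : Ω) (p ^ (n + 1))) :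
    adjoin K (Units.val '' (Γ : Set Ωˣ)) ⊓ L = K⟮(x : Ω)⟯ := by
  obtain ⟨m, rfl⟩ := Nat.exists_eq_add_of_le' hn
  have hxE : (x : Ω) ∈ K⟮(x : Ω)⟯ := mem_adjoin_simple_self K _
  have hxL' : K⟮(x : Ω)⟯ ≤ L := adjoin_simple_le_iff.2 hxL
  have hz : IsPrimitiveRoot ((x : Ω) ^ p ^ m) p :=
    hx.pow (pow_pos (Fact.out : p.Prime).pos _) (pow_succ p m)
  have hzK : (x : Ω) ^ p ^ m ∉ (⊥ : IntermediateField K Ω) := fun h => by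
    obtain ⟨a, ha⟩ := mem_bot.1 h
    exact hK ⟨a, (ha ▸ hz).of_map_of_injective (algebraMap K Ω).injective⟩
  refine le_antisymm ?_ (le_inf (adjoin.mono K _ _ ?_) hxL')
  · refine adjoin_inf_le (Γ := Γ.toSubmonoid.map (Units.coeHom Ω)) hodd ?_ hxL' hz
      (pow_mem hxE _) ?_
    · rintro _ ⟨γ, hγ, rfl⟩
      exact hΓ γ hγ
    · rintro _ ⟨γ, hγ, rfl⟩ hγL
      exact mem_adjoin_primitiveRoot_of_mem_of_mem hΓK hΓ hz (pow_mem hxL _) hzK hx hmax hγ hγL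
  · exact Set.singleton_subset_iff.2 ⟨x, hxΓ, rfl⟩

end Intersection

section AlgebraicClosure

variable {K : Type*} [Field K] {ℓ : ℕ}

lemma isPowRadical_iff_mem_radInf {x : (AlgebraicClosure K)ˣ} :
    IsPowRadical K ℓ (x : AlgebraicClosure K) ↔ x ∈ radInf K ℓ :=
  Iff.rfl

lemma le_radInf_of_relIndex_eq_pow {Γ : Subgroup (AlgebraicClosure K)ˣ} {m : ℕ}
    (hΓ : (baseUnits K).relIndex Γ = ℓ ^ m) : Γ ≤ radInf K ℓ := by
  intro x hx
  obtain ⟨c, hc⟩ : x ^ ℓ ^ m ∈ baseUnits K := by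
    have := ((baseUnits K).subgroupOf Γ).pow_index_mem ⟨x, hx⟩
    rwa [← Subgroup.relIndex, hΓ] at this
  exact ⟨m, c, by rw [← Units.val_pow_eq_pow_val, ← hc]; rfl⟩

lemma adjoin_primRoots_eq {n : ℕ} [NeZero n] {x : AlgebraicClosure K} (hx : IsPrimitiveRoot x n) :
    adjoin K (primRoots K n) = K⟮x⟯ := by
  refine le_antisymm (adjoin_le_iff.2 fun y hy => ?_)
    (adjoin.mono K _ _ (Set.singleton_subset_iff.2 hx))
  obtain ⟨i, -, rfl⟩ := hx.eq_pow_of_pow_eq_one (IsPrimitiveRoot.pow_eq_one hy)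
  exact pow_mem (mem_adjoin_simple_self K x) i

lemma isAbelianGalois_adjoin_union_primRoots {W : Subgroup (AlgebraicClosure K)ˣ}
    (hW : ∀ w ∈ W, IsOfFinOrder w) {n : ℕ} (hn : n ≠ 0) :
    IsAbelianGalois K
      (adjoin K (Units.val '' (W : Set (AlgebraicClosure K)ˣ) ∪ primRoots K n)) := by
  refine isAbelianGalois_adjoin_of_isOfFinOrder ?_
  rintro _ (⟨w, hw, rfl⟩ | hx)
  · exact Units.isOfFinOrder_val.2 (hW w hw)
  · exact IsPrimitiveRoot.isOfFinOrder hx hn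

end AlgebraicClosure

theorem stmt11_general (K : Type*) [Field K] (ℓ : ℕ) (hℓ : ℓ.Prime) (hℓodd : Odd ℓ)
    (hnK : ¬ ∃ z : K, IsPrimitiveRoot z ℓ)
    (W : Subgroup (AlgebraicClosure K)ˣ) (hW : ∀ w ∈ W, (orderOf w).Coprime ℓ)
    (Γℓ : Subgroup (AlgebraicClosure K)ˣ) (hΓK : baseUnits K ≤ Γℓ) (hΓ : Γℓ ≤ radInf K ℓ)
    (τ : ℕ) (hτ1 : 1 ≤ τ)
    (hτin : ∃ x : (AlgebraicClosure K)ˣ, IsPrimitiveRoot (x : AlgebraicClosure K) (ℓ ^ τ) ∧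
      x ∈ baseUnits K ⊔ W ⊔ Γℓ ∧ (x : AlgebraicClosure K) ∈
        adjoin K (Units.val '' (W : Set (AlgebraicClosure K)ˣ) ∪ primRoots K ℓ))
    (hτmax : ∀ x : (AlgebraicClosure K)ˣ,
      IsPrimitiveRoot (x : AlgebraicClosure K) (ℓ ^ (τ + 1)) →
      ¬ (x ∈ baseUnits K ⊔ W ⊔ Γℓ ∧ (x : AlgebraicClosure K) ∈
        adjoin K (Units.val '' (W : Set (AlgebraicClosure K)ˣ) ∪ primRoots K ℓ))) :
    adjoin K (Units.val '' (Γℓ : Set (AlgebraicClosure K)ˣ)) ⊓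
        adjoin K (Units.val '' (W : Set (AlgebraicClosure K)ˣ) ∪ primRoots K ℓ) =
      adjoin K (primRoots K (ℓ ^ τ)) := by
  have : Fact ℓ.Prime := ⟨hℓ⟩
  have : NeZero (ℓ ^ τ) := ⟨pow_ne_zero τ hℓ.ne_zero⟩
  obtain ⟨x, hx, hxΓ, hxL⟩ := hτin
  have hxΓℓ : x ∈ Γℓ := by
    rw [sup_right_comm, sup_eq_right.2 hΓK, sup_comm] at hxΓ
    exact mem_of_mem_sup_of_pow_eq_one (fun w hw => (hW w hw).pow_right τ) hxΓ
      (IsPrimitiveRoot.coe_units_iff.1 hx).pow_eq_one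
  have hWfin : ∀ w ∈ W, IsOfFinOrder w := fun w hw =>
    orderOf_ne_zero_iff.1 fun h => hℓ.ne_one (by simpa [h] using hW w hw)
  have := isAbelianGalois_adjoin_union_primRoots hWfin hℓ.ne_zero
  rw [adjoin_primRoots_eq hx]
  exact adjoin_inf_eq_adjoin_primitiveRoot (fun c => hΓK ⟨c, rfl⟩)
    (fun γ hγ => isPowRadical_iff_mem_radInf.2 (hΓ hγ)) hℓodd hnK hτ1 hx hxΓℓ hxL
    fun y hyΓ hyL hy => hτmax y hy ⟨le_sup_right (a := baseUnits K ⊔ W) hyΓ, hyL⟩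

/-- Lemma 5.1 (first part): with `ℓ` an odd prime different from `char K`, `ζ_ℓ ∉ K`,
`ζ_ℓ ∈ Γ`, and `τ ≥ 1` the largest integer such that `ζ_{ℓ^τ} ∈ Γ ∩ K(W_ℓ, ζ_ℓ)`, we have
`K(Γ_ℓ) ∩ K(W_ℓ, ζ_ℓ) = K(ζ_{ℓ^τ})`. -/
theorem stmt11 (K : Type*) [Field K] (ℓ : ℕ) (hℓ : ℓ.Prime) (hℓodd : Odd ℓ)
    (hchar : ringChar K ≠ ℓ) (hnK : ¬ ∃ z : K, IsPrimitiveRoot z ℓ)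
    (W : Subgroup (AlgebraicClosure K)ˣ)
    (hW : ∃ S : Set (AlgebraicClosure K)ˣ, S.Finite ∧
      (∀ x ∈ S, ∃ q : ℕ, q.Prime ∧ Odd q ∧ q ≠ ℓ ∧ q ≠ ringChar K ∧
        IsPrimitiveRoot (x : AlgebraicClosure K) q) ∧ W = Subgroup.closure S)
    (Γℓ : Subgroup (AlgebraicClosure K)ˣ) (hΓK : baseUnits K ≤ Γℓ)
    (hidx : ∃ m : ℕ, Subgroup.relIndex (baseUnits K) Γℓ = ℓ ^ m)
    (hζΓ : ∃ x ∈ baseUnits K ⊔ W ⊔ Γℓ, IsPrimitiveRoot (x : AlgebraicClosure K) ℓ)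
    (τ : ℕ) (hτ1 : 1 ≤ τ)
    (hτin : ∃ x : (AlgebraicClosure K)ˣ, IsPrimitiveRoot (x : AlgebraicClosure K) (ℓ ^ τ) ∧
      x ∈ baseUnits K ⊔ W ⊔ Γℓ ∧ (x : AlgebraicClosure K) ∈
        IntermediateField.adjoin K (Units.val '' (W : Set (AlgebraicClosure K)ˣ) ∪ primRoots K ℓ))
    (hτmax : ∀ x : (AlgebraicClosure K)ˣ,
      IsPrimitiveRoot (x : AlgebraicClosure K) (ℓ ^ (τ + 1)) →
      ¬ (x ∈ baseUnits K ⊔ W ⊔ Γℓ ∧ (x : AlgebraicClosure K) ∈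
        IntermediateField.adjoin K
          (Units.val '' (W : Set (AlgebraicClosure K)ˣ) ∪ primRoots K ℓ))) :
    IntermediateField.adjoin K (Units.val '' (Γℓ : Set (AlgebraicClosure K)ˣ)) ⊓
        IntermediateField.adjoin K
          (Units.val '' (W : Set (AlgebraicClosure K)ˣ) ∪ primRoots K ℓ) =
      IntermediateField.adjoin K (primRoots K (ℓ ^ τ)) := by
  obtain ⟨S, -, hS, rfl⟩ := hW
  obtain ⟨m, hm⟩ := hidx
  have hcop : ∀ s ∈ S, (orderOf s).Coprime ℓ := fun s hs => by
    obtain ⟨q, hq, -, hqℓ, -, hsq⟩ := hS s hs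
    rw [← (IsPrimitiveRoot.coe_units_iff.1 hsq).eq_orderOf]
    exact (Nat.coprime_primes hq hℓ).2 hqℓ
  exact stmt11_general K ℓ hℓ hℓodd hnK _ (fun w hw => orderOf_coprime_of_mem_closure hcop hw)
    Γℓ hΓK (le_radInf_of_relIndex_eq_pow hm) τ hτ1 hτin hτmax

end
end

section
/- Let char(K) ≠ 2 and consider the special case of Kneser's theorem: ζ_4 ∉ K and (1+ζ_4 ∈ Γ or 1−ζ_4 ∈ Γ). Then [K(Γ_2):K] = 2·|⟨Γ_2, K(ζ_4)^×⟩ : K(ζ_4)^×|. Moreover, setting Γ_{2,E} := ⟨Γ_2, K(ζ_4)^×⟩ ∩ K(W_2, ζ_4)^×, we have K(Γ_2) ∩ K(W_2, ζ_4) = K(Γ_{2,E}) and [K(Γ):K] = [K(Γ_2):K] · [K(W_2, ζ_4):K] / (2 · |Γ_{2,E} : K(ζ_4)^×|). -/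
noncomputable section

open IntermediateField

/-!
For a field `F ∋ ζ₄` and a group `G` of units whose index `|G F^× : F^×|` is a power of two,
`[F(G):F] = |G F^× : F^×|`. Indeed pick `a ∈ G \ F` with `a² ∈ F`; if `g ∈ F(a)` has some `2^n`-th
power in `F`, then `g ∈ F` or `g a ∈ F`, so that passing from `F` to `F(a)` halves the index.

In the special case, `-4 = (1 ± ζ₄)⁴ ∈ Γ₂` and `W₂` has no `2`-torsion, so `1 ± ζ₄ ∈ Γ₂` and
`K(ζ₄) ⊆ K(Γ₂)`. Hence the degree formula applies over `K(ζ₄)` and over every larger field. The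
intersection formula follows by comparing the degrees of `K(Γ₂)` over `K(Γ_{2,E})` and over
`K(Γ₂) ∩ K(W₂, ζ₄)`, since `Γ₂` meets both fields in the same group.
-/

section Group

variable {G : Type*}

lemma exists_mem_sq_mem_of_relIndex_dvd [Group G] {A B : Subgroup G} [A.Normal] (hBA : ¬B ≤ A)
    {k : ℕ} (hk : A.relIndex B ∣ 2 ^ k) : ∃ a ∈ B, a ∉ A ∧ a ^ 2 ∈ A := by
  obtain ⟨g, hgB, hgA⟩ := SetLike.not_le_iff_exists.1 hBA
  have hpow : g ^ 2 ^ k ∈ A := by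
    obtain ⟨c, hc⟩ := hk
    rw [hc, pow_mul]
    exact pow_mem (A.pow_relIndex_mem hgB) c
  clear hk
  induction k generalizing g with
  | zero => exact absurd (by simpa using hpow) hgA
  | succ k ih =>
    by_cases hg2 : g ^ 2 ∈ A
    · exact ⟨g, hgB, hgA, hg2⟩
    · exact ih (g ^ 2) (pow_mem hgB 2) hg2 (by rwa [← pow_mul, ← pow_succ'])

variable [CommGroup G]

lemma odd_orderOf_of_mem_closure {S : Set G} (hS : ∀ x ∈ S, Odd (orderOf x)) {w : G}
    (hw : w ∈ Subgroup.closure S) : Odd (orderOf w) := by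
  induction hw using Subgroup.closure_induction with
  | mem x hx => exact hS x hx
  | one => simp
  | mul x y _ _ hx hy => exact (hx.mul hy).of_dvd_nat (Commute.all x y).orderOf_mul_dvd_mul_orderOf
  | inv x _ hx => rwa [orderOf_inv]

lemma mem_of_mem_sup_of_pow_mem {W H : Subgroup G} {n : ℕ}
    (hW : ∀ w ∈ W, n.Coprime (orderOf w)) {x : G} (hx : x ∈ W ⊔ H) (hxn : x ^ n ∈ H) : x ∈ H := by
  obtain ⟨w, hw, h, hh, rfl⟩ := Subgroup.mem_sup.1 hx
  have hwn : w ^ n ∈ H := by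
    rwa [mul_pow, Subgroup.mul_mem_cancel_right _ (pow_mem hh n)] at hxn
  obtain ⟨k, hk⟩ := exists_pow_eq_self_of_coprime (hW w hw)
  exact mul_mem (hk ▸ pow_mem hwn k) hh

lemma relIndex_sup_inf_mul_relIndex {A B : Subgroup G} (hAB : A ≤ B) (H : Subgroup G) :
    A.relIndex ((H ⊔ A) ⊓ B) * B.relIndex H = A.relIndex H := by
  rw [sup_comm, sup_inf_assoc_of_le H hAB, Subgroup.relIndex_sup_left, inf_comm,
    Subgroup.relIndex_inf_mul_relIndex, inf_eq_left.2 hAB]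

end Group

section PrimitiveRoot

variable {R : Type*} [CommRing R] [IsDomain R] {ζ : R}

lemma sq_eq_neg_one_of_isPrimitiveRoot_four (hζ : IsPrimitiveRoot ζ 4) : ζ ^ 2 = -1 :=
  (hζ.pow (by norm_num) (by norm_num : 4 = 2 * 2)).eq_neg_one_of_two_right

lemma two_ne_zero_of_isPrimitiveRoot_four (hζ : IsPrimitiveRoot ζ 4) : (2 : R) ≠ 0 := by
  have h4 : ((4 : ℕ) : R) ≠ 0 := hζ.neZero'.out
  exact fun h2 ↦ h4 (by linear_combination 2 * h2)

lemma pow_four_eq_neg_four (hζ : IsPrimitiveRoot ζ 4) {u : R} (hu : u = 1 + ζ ∨ u = 1 - ζ) :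
    u ^ 4 = -4 := by
  have hζ2 := sq_eq_neg_one_of_isPrimitiveRoot_four hζ
  rcases hu with rfl | rfl
  · linear_combination (ζ ^ 2 + 4 * ζ + 5) * hζ2
  · linear_combination (ζ ^ 2 - 4 * ζ + 5) * hζ2

end PrimitiveRoot

section Tower

variable {K L : Type*} [Field K] [Field L] [Algebra K L]

lemma eq_of_relfinrank_eq {A B C : IntermediateField K L} (hAB : A ≤ B) (hBC : B ≤ C)
    (hB : B.relfinrank C ≠ 0) (h : A.relfinrank C = B.relfinrank C) : A = B := by
  have hmul := relfinrank_mul_relfinrank hAB hBC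
  rw [h, Nat.mul_eq_right hB] at hmul
  exact le_antisymm hAB (relfinrank_eq_one_iff.1 hmul)

end Tower

section Quadratic

variable {K L : Type*} [Field K] [Field L] [Algebra K L] {F : IntermediateField K L} {a : L}

lemma minpoly_eq_X_sq_sub_C (ha : a ∉ F) (ha2 : a ^ 2 ∈ F) :
    minpoly F a = Polynomial.X ^ 2 - Polynomial.C ⟨a ^ 2, ha2⟩ := by
  refine (minpoly.eq_of_irreducible_of_monic ?_ (by simp)
    (Polynomial.monic_X_pow_sub_C _ two_ne_zero)).symm
  refine X_pow_sub_C_irreducible_of_prime Nat.prime_two fun b hb ↦ ha ?_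
  rcases sq_eq_sq_iff_eq_or_eq_neg.1 (congrArg Subtype.val hb : (b : L) ^ 2 = a ^ 2) with h | h
  · exact h ▸ b.2
  · exact neg_mem_iff.1 (h ▸ b.2)

lemma isIntegral_of_sq_mem (ha2 : a ^ 2 ∈ F) : IsIntegral F a :=
  .of_pow two_pos (isIntegral_algebraMap (x := (⟨a ^ 2, ha2⟩ : F)))

lemma natDegree_minpoly_eq_two (ha : a ∉ F) (ha2 : a ^ 2 ∈ F) : (minpoly F a).natDegree = 2 := by
  rw [minpoly_eq_X_sq_sub_C ha ha2, Polynomial.natDegree_X_pow_sub_C]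

lemma relrank_sup_adjoin_simple_eq_two (ha : a ∉ F) (ha2 : a ^ 2 ∈ F) :
    F.relrank (F ⊔ K⟮a⟯) = 2 := by
  have hext : extendScalars (le_sup_left : F ≤ F ⊔ K⟮a⟯) = F⟮a⟯ := by
    apply restrictScalars_injective K
    rw [extendScalars_restrictScalars, restrictScalars_adjoin_eq_sup]
  rw [relrank_eq_rank_of_le le_sup_left, hext,
    rank_eq_card_basis (adjoin.powerBasis (isIntegral_of_sq_mem ha2)).basis, Fintype.card_fin,
    adjoin.powerBasis_dim, natDegree_minpoly_eq_two ha ha2, Nat.cast_two]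

lemma exists_eq_add_mul_of_mem_sup_adjoin_simple (ha : a ∉ F) (ha2 : a ^ 2 ∈ F) {x : L}
    (hx : x ∈ F ⊔ K⟮a⟯) : ∃ u ∈ F, ∃ v ∈ F, x = u + v * a := by
  rw [← restrictScalars_adjoin_eq_sup, mem_restrictScalars] at hx
  have hint := isIntegral_of_sq_mem ha2
  obtain ⟨f, hdeg, hf⟩ := (adjoin.powerBasis hint).exists_eq_aeval ⟨x, hx⟩
  rw [adjoin.powerBasis_dim, natDegree_minpoly_eq_two ha ha2] at hdeg
  obtain ⟨v, u, rfl⟩ := Polynomial.exists_eq_X_add_C_of_natDegree_le_one (Nat.le_of_lt_succ hdeg)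
  refine ⟨u, u.2, v, v.2, ?_⟩
  simpa [add_comm] using congrArg Subtype.val hf

lemma eq_zero_of_mul_mem (ha : a ∉ F) {c : L} (hc : c ∈ F) (hca : c * a ∈ F) : c = 0 := by
  by_contra h0
  exact ha (by simpa [h0] using mul_mem (inv_mem hc) hca)

variable {ζ : L}

lemma mul_mem_or_mem_of_sq (hζ : IsPrimitiveRoot ζ 4) (hζF : ζ ∈ F) (ha : a ∉ F)
    (ha2 : a ^ 2 ∈ F) {g : L} (hg : g ∈ F ⊔ K⟮a⟯) (hg2 : g ^ 2 * a ∈ F ∨ g ^ 2 ∈ F) :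
    g * a ∈ F ∨ g ∈ F := by
  have hζ2 := sq_eq_neg_one_of_isPrimitiveRoot_four hζ
  have h2 := two_ne_zero_of_isPrimitiveRoot_four hζ
  obtain ⟨u, hu, v, hv, rfl⟩ := exists_eq_add_mul_of_mem_sup_adjoin_simple ha ha2 hg
  have hre : u ^ 2 + v ^ 2 * a ^ 2 ∈ F := add_mem (pow_mem hu 2) (mul_mem (pow_mem hv 2) ha2)
  have him : 2 * (u * v) ∈ F := mul_mem (ofNat_mem F 2) (mul_mem hu hv)
  rcases hg2 with hg2 | hg2
  · have hre0 : u ^ 2 + v ^ 2 * a ^ 2 = 0 := eq_zero_of_mul_mem ha hre <| by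
      convert sub_mem hg2 (mul_mem him ha2) using 1; ring
    have hfactor : (u + ζ * (v * a)) * (u - ζ * (v * a)) = 0 := by
      linear_combination hre0 - v ^ 2 * a ^ 2 * hζ2
    have hva : ζ * v * a ∈ F := by
      rcases mul_eq_zero.1 hfactor with h | h
      · convert neg_mem hu using 1; linear_combination h
      · convert hu using 1; linear_combination -h
    have hv0 : v = 0 := (mul_eq_zero.1 (eq_zero_of_mul_mem ha (mul_mem hζF hv) hva)).resolve_left
      (hζ.ne_zero (by norm_num))
    right
    simpa [hv0] using hu
  · have him0 : 2 * (u * v) = 0 := eq_zero_of_mul_mem ha him <| by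
      convert sub_mem hg2 hre using 1; ring
    rcases mul_eq_zero.1 ((mul_eq_zero.1 him0).resolve_left h2) with rfl | rfl
    · left
      convert mul_mem hv ha2 using 1; ring
    · right
      simpa using hu

lemma mul_mem_or_mem_of_pow_two_pow (hζ : IsPrimitiveRoot ζ 4) (hζF : ζ ∈ F) (ha : a ∉ F)
    (ha2 : a ^ 2 ∈ F) (n : ℕ) {g : L} (hg : g ∈ F ⊔ K⟮a⟯)
    (hgn : g ^ 2 ^ n * a ∈ F ∨ g ^ 2 ^ n ∈ F) : g * a ∈ F ∨ g ∈ F := by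
  induction n generalizing g with
  | zero => simpa using hgn
  | succ n ih =>
    refine mul_mem_or_mem_of_sq hζ hζF ha ha2 hg (ih (pow_mem hg 2) ?_)
    rwa [← pow_mul, ← pow_succ']

end Quadratic

section AdjoinUnits

variable {K : Type*} [Field K]

/-- The field `K(G)` generated over `K` by a group `G` of units of the algebraic closure. It is
left adjoint to `F ↦ F^×`. -/
abbrev adjoinUnits (G : Subgroup (AlgebraicClosure K)ˣ) :
    IntermediateField K (AlgebraicClosure K) :=
  adjoin K (Units.val '' (G : Set (AlgebraicClosure K)ˣ))

variable {F E : IntermediateField K (AlgebraicClosure K)} {G : Subgroup (AlgebraicClosure K)ˣ}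

lemma adjoinUnits_le_iff : adjoinUnits G ≤ F ↔ G ≤ unitsIn F :=
  adjoin_le_iff.trans Set.image_subset_iff

lemma gc_adjoinUnits_unitsIn :
    GaloisConnection (adjoinUnits (K := K)) (unitsIn (K := K)) :=
  fun _ _ ↦ adjoinUnits_le_iff

lemma adjoinUnits_unitsIn (F : IntermediateField K (AlgebraicClosure K)) :
    adjoinUnits (unitsIn F) = F := by
  refine le_antisymm (gc_adjoinUnits_unitsIn.l_u_le F) fun x hx ↦ ?_
  by_cases h0 : x = 0
  · exact h0 ▸ zero_mem _
  · exact subset_adjoin K _ ⟨Units.mk0 x h0, hx, rfl⟩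

lemma adjoinUnits_sup_unitsIn (G : Subgroup (AlgebraicClosure K)ˣ)
    (F : IntermediateField K (AlgebraicClosure K)) :
    adjoinUnits (G ⊔ unitsIn F) = adjoinUnits G ⊔ F := by
  rw [gc_adjoinUnits_unitsIn.l_sup, adjoinUnits_unitsIn]

lemma baseUnits_le_unitsIn (F : IntermediateField K (AlgebraicClosure K)) :
    baseUnits K ≤ unitsIn F := by
  rintro _ ⟨x, rfl⟩
  exact F.algebraMap_mem x

lemma adjoin_baseUnits_union (hG : baseUnits K ≤ G) (H : Subgroup (AlgebraicClosure K)ˣ) :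
    adjoin K (Units.val '' (baseUnits K ⊔ H ⊔ G : Set (AlgebraicClosure K)ˣ)) =
      adjoinUnits H ⊔ adjoinUnits G := by
  simp only [Set.sup_eq_union, Set.image_union, adjoin_union]
  rw [sup_assoc, sup_eq_right]
  exact (gc_adjoinUnits_unitsIn.monotone_l hG).trans le_sup_right

lemma relIndex_unitsIn_sup_adjoin_simple_inf {ζ : AlgebraicClosure K} (hζ : IsPrimitiveRoot ζ 4)
    (hζF : ζ ∈ F) {m : ℕ} (hG : (unitsIn F).relIndex G ∣ 2 ^ m) {a : (AlgebraicClosure K)ˣ}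
    (haG : a ∈ G) (haF : a ∉ unitsIn F) (ha2 : a ^ 2 ∈ unitsIn F) :
    (unitsIn F).relIndex (unitsIn (F ⊔ K⟮(a : AlgebraicClosure K)⟯) ⊓ G) = 2 := by
  rw [Subgroup.relIndex_eq_two_iff_exists_notMem_and]
  refine ⟨a, ⟨(le_sup_right : _ ≤ F ⊔ _) (mem_adjoin_simple_self K _), haG⟩, haF, ?_⟩
  rintro g ⟨hg, hgG⟩
  have hgm : g ^ 2 ^ m ∈ unitsIn F := by
    obtain ⟨c, hc⟩ := hG
    rw [hc, pow_mul]
    exact pow_mem ((unitsIn F).pow_relIndex_mem hgG) c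
  exact mul_mem_or_mem_of_pow_two_pow hζ hζF haF ha2 m hg (.inr hgm)

lemma relrank_sup_adjoinUnits_of_le (hGF : G ≤ unitsIn F) :
    F.relrank (F ⊔ adjoinUnits G) = (unitsIn F).relIndex G := by
  rw [sup_eq_left.2 (adjoinUnits_le_iff.2 hGF), relrank_self, Subgroup.relIndex_eq_one.2 hGF,
    Nat.cast_one]

theorem relrank_sup_adjoinUnits {ζ : AlgebraicClosure K} (hζ : IsPrimitiveRoot ζ 4) (hζF : ζ ∈ F)
    {m : ℕ} (hG : (unitsIn F).relIndex G ∣ 2 ^ m) :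
    F.relrank (F ⊔ adjoinUnits G) = (unitsIn F).relIndex G := by
  induction m generalizing F with
  | zero => exact relrank_sup_adjoinUnits_of_le (Subgroup.relIndex_eq_one.1 (Nat.dvd_one.1 hG))
  | succ m ih =>
    by_cases hGF : G ≤ unitsIn F
    · exact relrank_sup_adjoinUnits_of_le hGF
    obtain ⟨a, haG, haF, ha2⟩ := exists_mem_sq_mem_of_relIndex_dvd hGF hG
    set F' := F ⊔ K⟮(a : AlgebraicClosure K)⟯
    have hFF' : F ≤ F' := le_sup_left
    have hindex : 2 * (unitsIn F').relIndex G = (unitsIn F).relIndex G := by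
      have h := Subgroup.relIndex_inf_mul_relIndex (unitsIn F) (unitsIn F') G
      rwa [relIndex_unitsIn_sup_adjoin_simple_inf hζ hζF hG haG haF ha2,
        inf_eq_left.2 (gc_adjoinUnits_unitsIn.monotone_u hFF')] at h
    have hdvd : (unitsIn F').relIndex G ∣ 2 ^ m := by
      rwa [← hindex, pow_succ', Nat.mul_dvd_mul_iff_left two_pos] at hG
    have hsup : F' ⊔ adjoinUnits G = F ⊔ adjoinUnits G := by
      have haK : (a : AlgebraicClosure K) ∈ adjoinUnits G := subset_adjoin K _ ⟨a, haG, rfl⟩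
      rw [sup_assoc, sup_eq_right.2 (adjoin_simple_le_iff.2 haK)]
    rw [← relrank_mul_relrank hFF' (hsup ▸ le_sup_left), relrank_sup_adjoin_simple_eq_two haF ha2,
      ← hsup, ih (hFF' hζF) hdvd, ← hindex, Nat.cast_mul, Nat.cast_two]

theorem sup_adjoinUnits_inf {ζ : AlgebraicClosure K} (hζ : IsPrimitiveRoot ζ 4) (hζF : ζ ∈ F)
    {m : ℕ} (hG : (unitsIn F).relIndex G ∣ 2 ^ m) (hFE : F ≤ E) :
    (F ⊔ adjoinUnits G) ⊓ E = F ⊔ adjoinUnits (G ⊓ unitsIn E) := by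
  set T := F ⊔ adjoinUnits G
  set M := F ⊔ adjoinUnits (G ⊓ unitsIn E)
  have hMT : M ≤ T ⊓ E := le_inf
    (sup_le_sup_left (gc_adjoinUnits_unitsIn.monotone_l inf_le_left) F)
    (sup_le hFE (adjoinUnits_le_iff.2 inf_le_right))
  have hdvd {B : IntermediateField K (AlgebraicClosure K)} (hFB : F ≤ B) :
      (unitsIn B).relIndex G ∣ 2 ^ m :=
    (Subgroup.relIndex_dvd_of_le_left G (gc_adjoinUnits_unitsIn.monotone_u hFB)).trans hG
  have hdegree {B : IntermediateField K (AlgebraicClosure K)} (hMB : M ≤ B) (hBT : B ≤ T ⊓ E) :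
      B.relfinrank T = (unitsIn E).relIndex G := by
    have hFB : F ≤ B := le_sup_left.trans hMB
    have hsup : B ⊔ adjoinUnits G = T := le_antisymm
      (sup_le (hBT.trans inf_le_left) le_sup_right) (sup_le_sup_right hFB _)
    have hinf : unitsIn B ⊓ G = unitsIn E ⊓ G := le_antisymm
      (inf_le_inf_right G (gc_adjoinUnits_unitsIn.monotone_u (hBT.trans inf_le_right)))
      (le_inf (inf_comm G (unitsIn E) ▸ adjoinUnits_le_iff.1 (le_sup_right.trans hMB))
        inf_le_right)
    rw [relfinrank_eq_toNat_relrank, ← hsup,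
      relrank_sup_adjoinUnits hζ (hFB hζF) (hdvd hFB), Cardinal.toNat_natCast,
      ← Subgroup.inf_relIndex_right, hinf, Subgroup.inf_relIndex_right]
  refine (eq_of_relfinrank_eq hMT inf_le_left ?_ ?_).symm
  · rw [hdegree hMT le_rfl]
    exact ne_zero_of_dvd_ne_zero (by positivity) (hdvd hFE)
  · rw [hdegree le_rfl hMT, hdegree hMT le_rfl]

theorem adjoinUnits_inf {ζ : AlgebraicClosure K} (hζ : IsPrimitiveRoot ζ 4) (hζF : ζ ∈ F)
    {m : ℕ} (hG : (unitsIn F).relIndex G ∣ 2 ^ m) (hFG : F ≤ adjoinUnits G) (hFE : F ≤ E) :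
    adjoinUnits G ⊓ E = adjoinUnits ((G ⊔ unitsIn F) ⊓ unitsIn E) := by
  rw [sup_comm, sup_inf_assoc_of_le G (gc_adjoinUnits_unitsIn.monotone_u hFE), sup_comm,
    adjoinUnits_sup_unitsIn, sup_comm, ← sup_adjoinUnits_inf hζ hζF hG hFE, sup_eq_right.2 hFG]

end AdjoinUnits

section FourthRoots

variable {K : Type*} [Field K] {ζ : AlgebraicClosure K}

lemma adjoin_primRoots {n : ℕ} [NeZero n] (hζ : IsPrimitiveRoot ζ n) :
    adjoin K (primRoots K n) = K⟮ζ⟯ := by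
  refine le_antisymm (adjoin_le_iff.2 fun x hx ↦ ?_)
    (adjoin_simple_le_iff.2 (subset_adjoin K _ hζ))
  obtain ⟨i, -, rfl⟩ := hζ.eq_pow_of_pow_eq_one (IsPrimitiveRoot.pow_eq_one hx)
  exact pow_mem (mem_adjoin_simple_self K ζ) i

lemma rank_adjoin_primRoots_four (hζ : IsPrimitiveRoot ζ 4)
    (hK : ¬∃ z : K, IsPrimitiveRoot z 4) : Module.rank K (adjoin K (primRoots K 4)) = 2 := by
  have hζK : ζ ∉ (⊥ : IntermediateField K (AlgebraicClosure K)) := by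
    rintro ⟨z, rfl⟩
    exact hK ⟨z, hζ.of_map_of_injective (algebraMap K (AlgebraicClosure K)).injective⟩
  have hζ2 : ζ ^ 2 ∈ (⊥ : IntermediateField K (AlgebraicClosure K)) := by
    rw [sq_eq_neg_one_of_isPrimitiveRoot_four hζ]
    exact neg_mem (one_mem _)
  rw [adjoin_primRoots hζ, ← relrank_bot_left, ← relrank_sup_adjoin_simple_eq_two hζK hζ2,
    bot_sup_eq]

lemma adjoin_primRoots_four_le_adjoinUnits {W Γ : Subgroup (AlgebraicClosure K)ˣ}
    (hW : ∀ w ∈ W, Odd (orderOf w)) (hΓ : baseUnits K ≤ Γ) (hζ : IsPrimitiveRoot ζ 4)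
    {u : (AlgebraicClosure K)ˣ} (hu : u ∈ baseUnits K ⊔ W ⊔ Γ)
    (huζ : (u : AlgebraicClosure K) = 1 + ζ ∨ (u : AlgebraicClosure K) = 1 - ζ) :
    adjoin K (primRoots K 4) ≤ adjoinUnits Γ := by
  have huWΓ : u ∈ W ⊔ Γ := sup_le (sup_le (hΓ.trans le_sup_right) le_sup_left) le_sup_right hu
  have hu4 : u ^ 4 ∈ Γ := by
    have hval : algebraMap K (AlgebraicClosure K) (-4) = (u : AlgebraicClosure K) ^ 4 := by
      rw [pow_four_eq_neg_four hζ huζ, map_neg, map_ofNat]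
    have h4 : (-4 : K) ≠ 0 := by
      intro h
      rw [h, map_zero] at hval
      exact pow_ne_zero 4 u.ne_zero hval.symm
    exact hΓ ⟨Units.mk0 (-4) h4, Units.ext hval⟩
  have huΓ : u ∈ Γ := mem_of_mem_sup_of_pow_mem
    (fun w hw ↦ (hW w hw).coprime_two_left.pow_left 2) huWΓ hu4
  have huK : (u : AlgebraicClosure K) ∈ adjoinUnits Γ := subset_adjoin K _ ⟨u, huΓ, rfl⟩
  rw [adjoin_primRoots hζ, adjoin_simple_le_iff]
  rcases huζ with h | h
  · simpa [h] using sub_mem huK (one_mem _)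
  · simpa [h] using sub_mem (one_mem _) huK

end FourthRoots

-- The degrees are cardinals: for infinite `W` they may be infinite, and `finrank` would be `0`.
theorem stmt14_general (K : Type*) [Field K] (W : Subgroup (AlgebraicClosure K)ˣ)
    (hW : ∀ w ∈ W, Odd (orderOf w))
    (Γ2 : Subgroup (AlgebraicClosure K)ˣ) (hΓK : baseUnits K ≤ Γ2)
    (hidx : ∃ m : ℕ, Subgroup.relIndex (baseUnits K) Γ2 = 2 ^ m)
    (hs : (¬ ∃ z : K, IsPrimitiveRoot z 4) ∧
      ∃ u ∈ baseUnits K ⊔ W ⊔ Γ2, ∃ i : AlgebraicClosure K, IsPrimitiveRoot i 4 ∧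
        ((u : AlgebraicClosure K) = 1 + i ∨ (u : AlgebraicClosure K) = 1 - i)) :
    letI Kζ4 := adjoin K (primRoots K 4)
    letI KW4 := adjoin K (Units.val '' (W : Set (AlgebraicClosure K)ˣ) ∪ primRoots K 4)
    letI Γ2E := (Γ2 ⊔ unitsIn Kζ4) ⊓ unitsIn KW4
    Module.rank K (adjoinUnits Γ2) =
      (2 * (unitsIn Kζ4).relIndex (Γ2 ⊔ unitsIn Kζ4) : ℕ) ∧
    adjoinUnits Γ2 ⊓ KW4 = adjoinUnits Γ2E ∧
    Module.rank K (adjoin K (Units.val '' (baseUnits K ⊔ W ⊔ Γ2 : Set (AlgebraicClosure K)ˣ))) *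
      (2 * (unitsIn Kζ4).relIndex Γ2E : ℕ) =
    Module.rank K (adjoinUnits Γ2) * Module.rank K KW4 := by
  obtain ⟨hK, u, hu, ζ, hζ, huζ⟩ := hs
  obtain ⟨m, hm⟩ := hidx
  have hrank := rank_adjoin_primRoots_four hζ hK
  have hLT := adjoin_primRoots_four_le_adjoinUnits hW hΓK hζ hu huζ
  have hζL : ζ ∈ adjoin K (primRoots K 4) := subset_adjoin K _ hζ
  rw [adjoin_baseUnits_union hΓK, adjoin_union]
  set L := adjoin K (primRoots K 4)
  set E := adjoinUnits W ⊔ L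
  have hLE : L ≤ E := le_sup_right
  have hdvd (F : IntermediateField K (AlgebraicClosure K)) : (unitsIn F).relIndex Γ2 ∣ 2 ^ m :=
    hm ▸ Subgroup.relIndex_dvd_of_le_left Γ2 (baseUnits_le_unitsIn F)
  have hT : Module.rank K (adjoinUnits Γ2) = (2 * (unitsIn L).relIndex Γ2 : ℕ) := by
    have h := relrank_sup_adjoinUnits hζ hζL (hdvd L)
    rw [sup_eq_right.2 hLT] at h
    rw [← rank_bot_mul_relrank hLT, hrank, h, Nat.cast_mul, Nat.cast_two]
  have hΓ : Module.rank K ↥(adjoinUnits W ⊔ adjoinUnits Γ2) =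
      Module.rank K E * (unitsIn E).relIndex Γ2 := by
    rw [← relrank_sup_adjoinUnits hζ (hLE hζL) (hdvd E), rank_bot_mul_relrank le_sup_left,
      sup_assoc, sup_eq_right.2 hLT]
  refine ⟨by rw [hT, Subgroup.relIndex_sup_right], adjoinUnits_inf hζ hζL (hdvd L) hLT hLE, ?_⟩
  rw [hΓ, hT, ← relIndex_sup_inf_mul_relIndex (gc_adjoinUnits_unitsIn.monotone_u hLE) Γ2]
  push_cast
  ring

/-- Theorem 4.6: let `char K ≠ 2` and consider the special case of Kneser's theorem, i.e.
`ζ₄ ∉ K` and `1 + ζ₄ ∈ Γ` or `1 - ζ₄ ∈ Γ`. Then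
`[K(Γ_2):K] = 2 ⬝ |⟨Γ_2, K(ζ₄)^×⟩ : K(ζ₄)^×|` and, setting
`Γ_{2,E} := ⟨Γ_2, K(ζ₄)^×⟩ ∩ K(W_2, ζ₄)^×`, we have `K(Γ_2) ∩ K(W_2, ζ₄) = K(Γ_{2,E})` and
`[K(Γ):K] = [K(Γ_2):K] ⬝ [K(W_2, ζ₄):K] / (2 ⬝ |Γ_{2,E} : K(ζ₄)^×|)`. -/
theorem stmt14 (K : Type*) [Field K] (hchar : ringChar K ≠ 2)
    (W : Subgroup (AlgebraicClosure K)ˣ)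
    (hW : ∃ S : Set (AlgebraicClosure K)ˣ, S.Finite ∧
      (∀ x ∈ S, ∃ q : ℕ, q.Prime ∧ Odd q ∧ q ≠ ringChar K ∧
        IsPrimitiveRoot (x : AlgebraicClosure K) q) ∧ W = Subgroup.closure S)
    (Γ2 : Subgroup (AlgebraicClosure K)ˣ) (hΓK : baseUnits K ≤ Γ2)
    (hidx : ∃ m : ℕ, Subgroup.relIndex (baseUnits K) Γ2 = 2 ^ m)
    (hs : (¬ ∃ z : K, IsPrimitiveRoot z 4) ∧
      ∃ u ∈ baseUnits K ⊔ W ⊔ Γ2, ∃ i : AlgebraicClosure K, IsPrimitiveRoot i 4 ∧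
        ((u : AlgebraicClosure K) = 1 + i ∨ (u : AlgebraicClosure K) = 1 - i)) :
    letI Kζ4 := IntermediateField.adjoin K (primRoots K 4)
    letI KW4 := IntermediateField.adjoin K
      (Units.val '' (W : Set (AlgebraicClosure K)ˣ) ∪ primRoots K 4)
    letI Γ2E := (Γ2 ⊔ unitsIn Kζ4) ⊓ unitsIn KW4
    Module.finrank K (IntermediateField.adjoin K
        (Units.val '' (Γ2 : Set (AlgebraicClosure K)ˣ))) =
      2 * Subgroup.relIndex (unitsIn Kζ4) (Γ2 ⊔ unitsIn Kζ4) ∧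
    IntermediateField.adjoin K (Units.val '' (Γ2 : Set (AlgebraicClosure K)ˣ)) ⊓ KW4 =
      IntermediateField.adjoin K (Units.val '' (Γ2E : Set (AlgebraicClosure K)ˣ)) ∧
    Module.finrank K (IntermediateField.adjoin K
        (Units.val '' ((baseUnits K ⊔ W ⊔ Γ2) : Set (AlgebraicClosure K)ˣ))) *
      (2 * Subgroup.relIndex (unitsIn Kζ4) Γ2E) =
    Module.finrank K (IntermediateField.adjoin K
        (Units.val '' (Γ2 : Set (AlgebraicClosure K)ˣ))) * Module.finrank K KW4 := by
  obtain ⟨S, -, hS, rfl⟩ := hW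
  have hSodd : ∀ x ∈ S, Odd (orderOf x) := fun x hx ↦ by
    obtain ⟨q, -, hq, -, hxq⟩ := hS x hx
    rwa [← orderOf_units, ← hxq.eq_orderOf]
  obtain ⟨hΓ2, hinf, hΓ⟩ :=
    stmt14_general K _ (fun _ ↦ odd_orderOf_of_mem_closure hSodd) Γ2 hΓK hidx hs
  exact ⟨Module.finrank_eq_of_rank_eq hΓ2, hinf, by
    simpa [Module.finrank] using congrArg Cardinal.toNat hΓ⟩

end
end
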